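/- arXiv:2201.04462 — 5 statements merged into one kernel-verified Lean document; each statement's English description precedes it below -/
import Mathlib

section
/- For every x ∈ ℝⁿ and every real λ ≠ 0, it holds that τ(λx) = τ(x) and f(λx) = λ f(x); i.e., the sample system is homogeneous. -/
open Matrix

/-- homogeneity of the sample system: for every `x` and every `c ≠ 0`,
`τ (c • x) = τ x` and `f (c • x) = c • f x`, where
`τ x = inf {s ∈ 𝒯 : xᵀ N(s) x > 0 or s = τ̄}` and `f x = M (τ x) x`. -/
theorem sample_system_homogeneous
    {n : ℕ} (hn : 1 ≤ n) (T : Set ℝ) (τbar : ℝ) (hτbar : 0 < τbar)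
    (N : ℝ → Matrix (Fin n) (Fin n) ℝ) (hN : ∀ s, (N s).IsSymm)
    (M : ℝ → Matrix (Fin n) (Fin n) ℝ)
    (τ : (Fin n → ℝ) → ℝ)
    (hτ : ∀ x, τ x = sInf {s | s ∈ T ∧ (0 < x ⬝ᵥ (N s) *ᵥ x ∨ s = τbar)})
    (f : (Fin n → ℝ) → (Fin n → ℝ))
    (hf : ∀ x, f x = (M (τ x)) *ᵥ x) :
    ∀ (x : Fin n → ℝ) (c : ℝ), c ≠ 0 → τ (c • x) = τ x ∧ f (c • x) = c • f x := by
  intro x c hc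
  have h : τ (c • x) = τ x := by
    rw [hτ, hτ]
    congr 1
    ext s
    have hpos : 0 < c * c := mul_self_pos.mpr hc
    have e : (c • x) ⬝ᵥ (N s) *ᵥ (c • x) = (c * c) * (x ⬝ᵥ (N s) *ᵥ x) := by
      rw [mulVec_smul, smul_dotProduct, dotProduct_smul, smul_eq_mul, smul_eq_mul, mul_assoc]
    simp only [Set.mem_setOf_eq]
    rw [e, mul_pos_iff_of_pos_left hpos]
  refine ⟨h, ?_⟩
  rw [hf, hf, h, mulVec_smul]
end

section
/- Let τ̄ > 0 and let N : ℝ → ℝ^{n×n} be a differentiable family of symmetric matrices with entrywise derivative Ṅ(s), and suppose that for every x ∈ ℝⁿ ∖ {0} and every s ∈ (0, τ̄], xᵀN(s)x = 0 implies xᵀṄ(s)x > 0. Then for every x ≠ 0 and every s ∈ (0, τ̄] with xᵀN(s)x = 0, one has xᵀN(s')x ≤ 0 for all s' ∈ (0, s); consequently, for each x ≠ 0 the function s ↦ xᵀN(s)x has at most one zero in (0, τ̄]. -/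
open Matrix Set

lemma crossing_aux (f f' : ℝ → ℝ) (a b : ℝ) (hab : a < b)
    (hd : ∀ s, HasDerivAt f (f' s) s)
    (hp : ∀ s ∈ Icc a b, f s = 0 → 0 < f' s) (hb : f b = 0) : f a < 0 := by
  by_contra hcon
  have hfa : 0 ≤ f a := not_lt.mp hcon
  have key : ∀ ⦃x⦄, x ∈ Icc a b → -f x ≤ (fun _ => (0:ℝ)) x := by
    apply image_le_of_deriv_right_lt_deriv_boundary (f := fun x => -f x)
      (f' := fun x => -f' x) (B := fun _ => (0:ℝ)) (B' := fun _ => (0:ℝ))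
    · exact fun x _ => (hd x).neg.continuousAt.continuousWithinAt
    · exact fun x _ => (hd x).neg.hasDerivWithinAt
    · simpa using hfa
    · exact fun x => hasDerivAt_const x 0
    · intro x hx h
      have := hp x ⟨hx.1, hx.2.le⟩ (by simpa using h)
      simpa using this
  have hs := hasDerivAt_iff_tendsto_slope.mp (hd b)
  have h1 := hs.eventually (lt_mem_nhds (hp b ⟨hab.le, le_rfl⟩ hb))
  have h2 := h1.filter_mono (nhdsWithin_mono b (fun y (hy : y ∈ Iio b) => ne_of_lt hy))
  obtain ⟨y, hy, hy2⟩ := (h2.and (Ioo_mem_nhdsLT hab)).exists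
  have hk : 0 ≤ f y := by simpa using key ⟨hy2.1.le, hy2.2.le⟩
  rw [slope_def_field, hb, sub_zero] at hy
  exact absurd hy (not_lt.mpr (div_nonpos_of_nonneg_of_nonpos hk (by linarith [hy2.2])))

/-- if for every `x ≠ 0` and `s ∈ (0, τ̄]`, `xᵀN(s)x = 0` implies
`xᵀṄ(s)x > 0`, then whenever `xᵀN(s)x = 0` with `s ∈ (0, τ̄]` one has
`xᵀN(s')x ≤ 0` for all `s' ∈ (0, s)`; consequently `s ↦ xᵀN(s)x` has at most one
zero in `(0, τ̄]`. -/
theorem triggering_function_single_crossing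
    {n : ℕ} (τbar : ℝ) (hτbar : 0 < τbar)
    (N N' : ℝ → Matrix (Fin n) (Fin n) ℝ)
    (hsymm : ∀ s, (N s).IsSymm)
    (hderiv : ∀ (i j : Fin n) (s : ℝ), HasDerivAt (fun u => N u i j) (N' s i j) s)
    (htrans : ∀ (x : Fin n → ℝ), x ≠ 0 → ∀ s ∈ Ioc (0:ℝ) τbar,
      x ⬝ᵥ (N s) *ᵥ x = 0 → 0 < x ⬝ᵥ (N' s) *ᵥ x) :
    (∀ (x : Fin n → ℝ), x ≠ 0 → ∀ s ∈ Ioc (0:ℝ) τbar, x ⬝ᵥ (N s) *ᵥ x = 0 →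
      ∀ s' ∈ Ioo (0:ℝ) s, x ⬝ᵥ (N s') *ᵥ x ≤ 0) ∧
    (∀ (x : Fin n → ℝ), x ≠ 0 → ∀ s₁ ∈ Ioc (0:ℝ) τbar, ∀ s₂ ∈ Ioc (0:ℝ) τbar,
      x ⬝ᵥ (N s₁) *ᵥ x = 0 → x ⬝ᵥ (N s₂) *ᵥ x = 0 → s₁ = s₂) := by
  have hd : ∀ (x : Fin n → ℝ) (s : ℝ),
      HasDerivAt (fun u => x ⬝ᵥ (N u) *ᵥ x) (x ⬝ᵥ (N' s) *ᵥ x) s := by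
    intro x s
    simp only [dotProduct, mulVec]
    exact HasDerivAt.fun_sum fun i _ => HasDerivAt.const_mul _
      (HasDerivAt.fun_sum fun j _ => (hderiv i j s).mul_const _)
  have main : ∀ (x : Fin n → ℝ), x ≠ 0 → ∀ s ∈ Ioc (0:ℝ) τbar, x ⬝ᵥ (N s) *ᵥ x = 0 →
      ∀ s' ∈ Ioo (0:ℝ) s, x ⬝ᵥ (N s') *ᵥ x < 0 := by
    intro x hx s hs h0 s' hs'
    exact crossing_aux (fun u => x ⬝ᵥ (N u) *ᵥ x) (fun u => x ⬝ᵥ (N' u) *ᵥ x) s' s hs'.2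
      (hd x) (fun u hu h => htrans x hx u ⟨hs'.1.trans_le hu.1, hu.2.trans hs.2⟩ h) h0
  refine ⟨fun x hx s hs h0 s' hs' => (main x hx s hs h0 s' hs').le, ?_⟩
  intro x hx s₁ h₁ s₂ h₂ e₁ e₂
  rcases lt_trichotomy s₁ s₂ with h | h | h
  · exact absurd e₁ (main x hx s₂ h₂ e₂ s₁ ⟨h₁.1, h⟩).ne
  · exact h
  · exact absurd e₂ (main x hx s₁ h₁ e₁ s₂ ⟨h₂.1, h⟩).ne
end

section
/- Let σ = (y₁, …, y_m) be a finite sequence of reals, assume M_σ := M(y_m)⋯M(y₂)M(y₁) is invertible, and let A ⊆ ℝⁿ be a linear subspace with M_σ A = A and A ∖ {0} ⊆ Q_σ. Then for every x ∈ A ∖ {0}, the trajectory x₀ = x, x_{k+1} = f(x_k) satisfies τ(x_{im+j−1}) = y_j for every i ∈ ℕ and every j ∈ {1, …, m}; i.e., the output sequence of the sample system started at x is the infinite periodic repetition σ^ω of σ. -/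
open Matrix

/-- The intersample state sequence generated from `x` by applying, in order, the
matrices `M (y 0), M (y 1), …, M (y (m-1))`: `z 0 = x`, `z (j+1) = M (y j) z j`
(indices beyond `m` are left unchanged). -/
def seqStates {n m : ℕ} (M : ℝ → Matrix (Fin n) (Fin n) ℝ) (y : Fin m → ℝ)
    (x : Fin n → ℝ) : ℕ → (Fin n → ℝ)
  | 0 => x
  | (j + 1) =>
    if h : j < m then (M (y ⟨j, h⟩)) *ᵥ (seqStates M y x j) else seqStates M y x j

theorem seqStates_eq_prod {n m : ℕ} (M : ℝ → Matrix (Fin n) (Fin n) ℝ) (y : Fin m → ℝ)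
    (x : Fin n → ℝ) (k : ℕ) (hk : k ≤ m) :
    seqStates M y x k
      = ((List.ofFn (fun j : Fin m => M (y j))).take k).reverse.prod *ᵥ x := by
  induction k with
  | zero => simp [seqStates]
  | succ k ih =>
    have h : k < m := hk
    have hl : k < (List.ofFn (fun j : Fin m => M (y j))).length := by simpa using h
    rw [seqStates, dif_pos h, ih h.le, List.take_succ_eq_append_getElem hl]
    simp [Matrix.mulVec_mulVec]

/-- if `M_σ = M(y_m)⋯M(y_1)` is invertible and `A` is a linear subspace
with `M_σ A = A` and `A ∖ {0} ⊆ Q_σ`, then from every `x ∈ A ∖ {0}` the sample system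
`x_{k+1} = f(x_k)` produces the periodic output sequence `σ^ω`:
`τ(x_{i·m+j}) = y j` for every `i ∈ ℕ` and `j ∈ {0, …, m-1}` (0-based indexing). -/
theorem periodic_pattern_from_linear_invariant
    {n m : ℕ} (hn : 1 ≤ n) (hm : 1 ≤ m)
    (T : Set ℝ) (τbar : ℝ) (hτbar : 0 < τbar)
    (N : ℝ → Matrix (Fin n) (Fin n) ℝ) (hNsymm : ∀ s, (N s).IsSymm)
    (M : ℝ → Matrix (Fin n) (Fin n) ℝ)
    (τ : (Fin n → ℝ) → ℝ)
    (hτ : ∀ x, τ x = sInf {s | s ∈ T ∧ (0 < x ⬝ᵥ (N s) *ᵥ x ∨ s = τbar)})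
    (f : (Fin n → ℝ) → (Fin n → ℝ))
    (hf : ∀ x, f x = (M (τ x)) *ᵥ x)
    (y : Fin m → ℝ)
    (Mσ : Matrix (Fin n) (Fin n) ℝ)
    (hMσ : Mσ = (List.ofFn (fun j : Fin m => M (y j))).reverse.prod)
    (hMσunit : IsUnit Mσ)
    (A : Submodule ℝ (Fin n → ℝ))
    (hAinv : A.map (Matrix.mulVecLin Mσ) = A)
    (hAQ : ∀ x ∈ A, x ≠ 0 → ∀ j : Fin m, τ (seqStates M y x j) = y j) :
    ∀ x ∈ A, x ≠ 0 → ∀ (i : ℕ) (j : Fin m), τ (f^[i * m + j] x) = y j := by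
  have key : ∀ x ∈ A, x ≠ 0 → ∀ k ≤ m, f^[k] x = seqStates M y x k := by
    intro x hx h0 k
    induction k with
    | zero => intro _; rfl
    | succ k ih =>
      intro hk
      have h : k < m := hk
      rw [Function.iterate_succ_apply', ih h.le, hf, hAQ x hx h0 ⟨k, h⟩, seqStates, dif_pos h]
  have keym : ∀ x ∈ A, x ≠ 0 → f^[m] x = Mσ *ᵥ x := by
    intro x hx h0
    rw [key x hx h0 m le_rfl, seqStates_eq_prod M y x m le_rfl, hMσ,
      List.take_of_length_le (by simp)]
  have step : ∀ x ∈ A, x ≠ 0 → f^[m] x ∈ A ∧ f^[m] x ≠ 0 := by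
    intro x hx h0
    rw [keym x hx h0]
    refine ⟨?_, fun h => h0 ?_⟩
    · rw [← hAinv]
      exact Submodule.mem_map.2 ⟨x, hx, rfl⟩
    · apply Matrix.mulVec_injective_of_isUnit hMσunit
      simpa using h
  intro x hx h0 i
  induction i generalizing x with
  | zero =>
    intro j
    rw [Nat.zero_mul, Nat.zero_add, key x hx h0 j j.2.le]
    exact hAQ x hx h0 j
  | succ i ih =>
    intro j
    have e : (i + 1) * m + (j : ℕ) = (i * m + j) + m := by ring
    rw [e, Function.iterate_add_apply]
    exact ih _ (step x hx h0).1 (step x hx h0).2 j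
end

section
/- Let 0 < σ < 1 and let M : ℝ → ℝ^{n×n} be continuous with M(0) = I. For x ≠ 0 set S(x) := {s > 0 : ‖M(s)x − x‖ > σ‖M(s)x‖}. Let v ≠ 0, suppose S(v) is nonempty and t := inf S(v) > 0, and suppose M(t)v = a·v for some a ∈ ℝ with |a| < 1. Then a = 1/(1+σ); in particular 1/(1+σ) is an eigenvalue of M(t). -/
open Matrix

/-- for the relative-error triggering condition
`‖M(s)x − x‖ > σ‖M(s)x‖` with `0 < σ < 1`, if `v ≠ 0` spans a fixed o-line with
inter-event time `t = inf S(v) > 0` and `M(t) v = a v` with `|a| < 1`, then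
`a = 1/(1+σ)`; in particular `1/(1+σ)` is an eigenvalue of `M(t)`. -/
theorem fixed_oline_tabuada_eigenvalue
    {n : ℕ} (σ : ℝ) (hσ : 0 < σ) (hσ1 : σ < 1)
    (M : ℝ → Matrix (Fin n) (Fin n) ℝ)
    (hMcont : ∀ i j, Continuous (fun s => M s i j))
    (hM0 : M 0 = 1)
    (S : EuclideanSpace ℝ (Fin n) → Set ℝ)
    (hS : ∀ x, S x = {s : ℝ | 0 < s ∧
      σ * ‖Matrix.toEuclideanLin (M s) x‖ < ‖Matrix.toEuclideanLin (M s) x - x‖})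
    (v : EuclideanSpace ℝ (Fin n)) (hv : v ≠ 0)
    (hSne : (S v).Nonempty)
    (t : ℝ) (ht : t = sInf (S v)) (htpos : 0 < t)
    (a : ℝ) (ha : Matrix.toEuclideanLin (M t) v = a • v) (haGES : |a| < 1) :
    a = 1 / (1 + σ) ∧ Module.End.HasEigenvalue (Matrix.toEuclideanLin (M t)) (1 / (1 + σ)) := by
  have hc : Continuous (fun s => Matrix.toEuclideanLin (M s) v) := by
    have hM : Continuous M := continuous_matrix hMcont
    have h2 : Continuous (fun s => WithLp.toLp 2 (M s *ᵥ v.ofLp)) :=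
      (PiLp.continuous_toLp 2 _).comp (hM.matrix_mulVec continuous_const)
    exact h2
  have hopen : IsOpen (S v) := by
    rw [hS]
    exact (isOpen_lt continuous_const continuous_id).inter
      (isOpen_lt (continuous_const.mul hc.norm) (hc.sub continuous_const).norm)
  have hbdd : BddBelow (S v) := ⟨0, fun s hs => by rw [hS] at hs; exact hs.1.le⟩
  have hle : σ * ‖Matrix.toEuclideanLin (M t) v‖ ≤ ‖Matrix.toEuclideanLin (M t) v - v‖ := by
    have hcl : t ∈ closure (S v) := ht ▸ csInf_mem_closure hSne hbdd
    have hclosed : IsClosed {s : ℝ | σ * ‖Matrix.toEuclideanLin (M s) v‖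
        ≤ ‖Matrix.toEuclideanLin (M s) v - v‖} :=
      isClosed_le (continuous_const.mul hc.norm) (hc.sub continuous_const).norm
    exact closure_minimal (fun s hs => by rw [hS] at hs; exact hs.2.le) hclosed hcl
  have hnot : t ∉ S v := by
    intro hmem
    obtain ⟨l, hl, hsub⟩ := exists_Ioc_subset_of_mem_nhds (hopen.mem_nhds hmem) ⟨t - 1, by linarith⟩
    have h1 : (l + t) / 2 ∈ S v := hsub ⟨by linarith, by linarith⟩
    have h2 := csInf_le hbdd h1
    rw [← ht] at h2
    linarith
  have hge : ‖Matrix.toEuclideanLin (M t) v - v‖ ≤ σ * ‖Matrix.toEuclideanLin (M t) v‖ := by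
    by_contra h
    apply hnot
    rw [hS]
    exact ⟨htpos, not_le.mp h⟩
  have heq := le_antisymm hle hge
  have hvn : 0 < ‖v‖ := norm_pos_iff.mpr hv
  have hsub : a • v - v = (a - 1) • v := by rw [sub_smul, one_smul]
  rw [ha, hsub, norm_smul, norm_smul, ← mul_assoc] at heq
  have h3 := mul_right_cancel₀ hvn.ne' heq
  rw [Real.norm_eq_abs, Real.norm_eq_abs] at h3
  have ha1 := abs_lt.mp haGES
  rw [abs_of_neg (show a - 1 < 0 by linarith)] at h3
  have hval : a = 1 / (1 + σ) := by
    rw [eq_div_iff (by linarith)]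
    rcases le_or_gt 0 a with h | h
    · rw [abs_of_nonneg h] at h3
      linarith
    · rw [abs_of_neg h] at h3
      nlinarith
  refine ⟨hval, ?_⟩
  rw [← hval]
  exact Module.End.hasEigenvalue_of_hasEigenvector
    (Module.End.hasEigenvector_iff.mpr ⟨Module.End.mem_eigenspace_iff.mpr ha, hv⟩)
end

section
/- Let n be odd and let f : ℝⁿ → ℝⁿ be continuous, satisfy f(cx) = c f(x) for all c ≠ 0 and all x, and satisfy f(x) ≠ 0 whenever x ≠ 0. Then f has a fixed o-line: there exist v ≠ 0 and μ ∈ ℝ such that f(v) = μ·v. -/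
section Aux
open MeasureTheory Metric Set Module

lemma poly_contra {n : ℕ} (hn : Odd n) (P : Polynomial ℝ) (V : ℝ) (hV : 0 < V) (K : ℝ)
    (h : ∀ s, K < s → P.eval s = (Real.sqrt (s^2+1))^n * V) : False := by
  have e : P^2 = Polynomial.C (V^2) * (Polynomial.X^2 + 1)^n := by
    apply Polynomial.eq_of_infinite_eval_eq
    apply (Set.Ioi_infinite K).mono
    intro s hs
    simp only [Set.mem_ofPred_eq, Polynomial.eval_pow, Polynomial.eval_mul, Polynomial.eval_C,
      Polynomial.eval_add, Polynomial.eval_X, Polynomial.eval_one]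
    rw [h s hs, mul_pow, ← pow_mul, mul_comm n 2, pow_mul, Real.sq_sqrt (by positivity)]
    ring
  have hP : P ≠ 0 := by
    rintro rfl
    have := h (K+1) (by linarith)
    simp only [Polynomial.eval_zero] at this
    have : 0 < (Real.sqrt ((K+1)^2+1))^n * V := by positivity
    linarith
  have e2 := congrArg (Polynomial.map (algebraMap ℝ ℂ)) e
  have hP2 : P.map (algebraMap ℝ ℂ) ≠ 0 := (Polynomial.map_ne_zero_iff (algebraMap ℝ ℂ).injective).2 hP
  have hf : (Polynomial.X^2 + 1 : Polynomial ℂ) = (Polynomial.X - Polynomial.C Complex.I) * (Polynomial.X - Polynomial.C (-Complex.I)) := by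
    have : (Polynomial.C Complex.I)^2 = (-1 : Polynomial ℂ) := by
      rw [← Polynomial.C_pow, Complex.I_sq]; simp
    rw [Polynomial.C_neg]
    linear_combination this
  have e3 := congrArg (fun p => Polynomial.roots p |>.count Complex.I) e2
  have hI : ¬ (-Complex.I = Complex.I) := by
    intro h
    have := congrArg Complex.im h
    norm_num at this
  have hI' : ¬ (Complex.I = -Complex.I) := fun h => hI h.symm
  simp only [Polynomial.map_pow, Polynomial.map_mul, Polynomial.map_C, Polynomial.map_add, Polynomial.map_X, Polynomial.map_one, hf] at e3
  rw [Polynomial.roots_C_mul _ (by simpa using hV.ne'), Polynomial.roots_pow, Polynomial.roots_pow,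
    Polynomial.roots_mul (mul_ne_zero (Polynomial.X_sub_C_ne_zero _) (Polynomial.X_sub_C_ne_zero _)),
    Polynomial.roots_X_sub_C, Polynomial.roots_X_sub_C, Multiset.count_nsmul, Multiset.count_nsmul,
    Multiset.count_add, Multiset.count_singleton, Multiset.count_singleton] at e3
  simp [hI'] at e3
  obtain ⟨k, hk⟩ := hn
  omega

lemma charpoly_pos {E : Type*} [NormedAddCommGroup E] [InnerProductSpace ℝ E] [FiniteDimensional ℝ E]
    (hE : Odd (finrank ℝ E)) (A : E →L[ℝ] E) {s : ℝ} (hs : ‖A‖ < s) :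
    0 < (A : E →ₗ[ℝ] E).charpoly.eval s := by
  set p := (A : E →ₗ[ℝ] E).charpoly with hp
  have hm : p.Monic := LinearMap.charpoly_monic _
  have hdeg : p.natDegree = finrank ℝ E := LinearMap.charpoly_natDegree _
  have hnz : ∀ t, ‖A‖ < t → p.eval t ≠ 0 := by
    intro t ht h0
    have : Nontrivial E := Module.nontrivial_of_finrank_pos (R := ℝ) hE.pos
    have : Module.End.HasEigenvalue (A : E →ₗ[ℝ] E) t := by
      rw [Module.End.hasEigenvalue_iff_isRoot_charpoly]
      exact h0
    obtain ⟨v, hv⟩ := this.exists_hasEigenvector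
    have h1 : A v = t • v := hv.apply_eq_smul
    have h2 := A.le_opNorm v
    have h3 : 0 < ‖v‖ := norm_pos_iff.2 hv.2
    rw [h1, norm_smul] at h2
    have := le_of_mul_le_mul_right h2 h3
    have := le_abs_self t
    rw [Real.norm_eq_abs] at *
    linarith
  by_contra hneg
  push Not at hneg
  have ht : Filter.Tendsto (fun x => p.eval x) Filter.atTop Filter.atTop := by
    apply Polynomial.tendsto_atTop_of_leadingCoeff_nonneg
    · rw [← Polynomial.natDegree_pos_iff_degree_pos, hdeg]; exact hE.pos
    · rw [hm]; norm_num
  obtain ⟨t, ht1, ht2⟩ := ((ht.eventually_ge_atTop 0).and (Filter.eventually_gt_atTop s)).exists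
  obtain ⟨c, hc, hc0⟩ := intermediate_value_Icc ht2.le p.continuous.continuousOn ⟨hneg, ht1⟩
  exact hnz c (hs.trans_le hc.1) hc0

lemma milnor {E : Type*} [NormedAddCommGroup E] [InnerProductSpace ℝ E] [FiniteDimensional ℝ E]
    [MeasurableSpace E] [BorelSpace E]
    (hE : Odd (finrank ℝ E)) (w : E → E) (K : NNReal) (hL : LipschitzWith K w)
    (hd : ∀ x, x ≠ 0 → DifferentiableAt ℝ w x) (ho : ∀ x, inner ℝ x (w x) = 0)
    (hN : ∀ x, ‖w x‖ = ‖x‖) : False := by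
  have : Nontrivial E := Module.nontrivial_of_finrank_pos (R := ℝ) hE.pos
  set N := finrank ℝ E
  let μ : Measure E := Measure.addHaar
  set S : Set E := ball 0 1 \ {0} with hS
  have hSm : MeasurableSet S := measurableSet_ball.diff (measurableSet_singleton 0)
  let q : E → Polynomial ℝ := fun x => (fderiv ℝ w x : E →ₗ[ℝ] E).charpoly
  set V := (μ (ball 0 1)).toReal with hVdef
  have hV : 0 < V := ENNReal.toReal_pos (measure_ball_pos μ 0 one_pos).ne' measure_ball_lt_top.ne
  have hnorm : ∀ s x, ‖s • x - w x‖ = Real.sqrt (s^2+1) * ‖x‖ := by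
    intro s x
    rw [← Real.sqrt_sq (norm_nonneg (s • x - w x)), norm_sub_sq_real, inner_smul_left, ho, hN, norm_smul,
      ← Real.sqrt_sq (norm_nonneg x), ← Real.sqrt_mul (by positivity)]
    congr 1
    rw [Real.sqrt_sq (norm_nonneg x), mul_pow, Real.norm_eq_abs, sq_abs]
    simp; ring
  have hinj : ∀ s : ℝ, K < s → Function.Injective (fun x => s • x - w x) := by
    intro s hs x y hxy
    have h1 : s • (x - y) = w x - w y := by
      rw [smul_sub]; simp only at hxy; rw [sub_eq_sub_iff_add_eq_add] at hxy ⊢; rw [hxy, add_comm]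
    have h2 := hL.norm_sub_le x y
    rw [← h1, norm_smul] at h2
    by_contra hne
    have h3 : 0 < ‖x - y‖ := norm_pos_iff.2 (sub_ne_zero.2 hne)
    have := le_of_mul_le_mul_right h2 h3
    have := le_abs_self s
    rw [Real.norm_eq_abs] at *
    linarith
  have hsurj : ∀ s : ℝ, K < s → Function.Surjective (fun x => s • x - w x) := by
    intro s hs y
    have hs0 : 0 < s := K.2.trans_lt hs
    have hc : ContractingWith (K / s.toNNReal) (fun x => s⁻¹ • (y + w x)) := by
      refine ⟨?_, ?_⟩
      · rw [div_lt_one (by simpa using hs0)]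
        exact NNReal.coe_lt_coe.1 (by simpa [hs0.le] using hs)
      · apply LipschitzWith.of_dist_le_mul
        intro a b
        have := hL.norm_sub_le a b
        rw [dist_eq_norm, dist_eq_norm, ← smul_sub, add_sub_add_left_eq_sub, norm_smul]
        simp only [NNReal.coe_div, Real.coe_toNNReal _ hs0.le, norm_inv, Real.norm_eq_abs, abs_of_pos hs0]
        calc s⁻¹ * ‖w a - w b‖ ≤ s⁻¹ * (K * ‖a - b‖) := by gcongr
          _ = _ := by ring
    refine ⟨hc.fixedPoint _, ?_⟩
    have h := hc.fixedPoint_isFixedPt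
    set x := hc.fixedPoint _
    have h' : s⁻¹ • (y + w x) = x := h
    simp only
    nth_rw 1 [← h']
    rw [smul_inv_smul₀ hs0.ne']
    simp
  have himg : ∀ s : ℝ, K < s → (fun x => s • x - w x) '' S = ball 0 (Real.sqrt (s^2+1)) \ {0} := by
    intro s hs
    have hr : 0 < Real.sqrt (s^2+1) := by positivity
    ext y
    constructor
    · rintro ⟨x, ⟨hx1, hx2⟩, rfl⟩
      simp only [mem_ball_zero_iff, mem_singleton_iff, mem_sdiff] at *
      rw [hnorm, ← norm_eq_zero, hnorm]
      refine ⟨by nlinarith, ?_⟩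
      have := norm_pos_iff.2 hx2
      positivity
    · rintro ⟨hy1, hy2⟩
      obtain ⟨x, rfl⟩ := hsurj s hs y
      refine ⟨x, ?_, rfl⟩
      simp only [mem_ball_zero_iff, mem_singleton_iff, mem_sdiff, hS] at *
      rw [← norm_eq_zero, hnorm] at hy2
      rw [hnorm] at hy1
      refine ⟨by nlinarith, ?_⟩
      rintro rfl
      simp at hy2
  have hder : ∀ s : ℝ, ∀ x ∈ S, HasFDerivWithinAt (fun x => s • x - w x)
      (s • ContinuousLinearMap.id ℝ E - fderiv ℝ w x) S x := by
    intro s x hx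
    exact (((hasFDerivAt_id x).const_smul s).sub (hd x hx.2).hasFDerivAt).hasFDerivWithinAt
  have hdet : ∀ s : ℝ, K < s → ∀ x, |(s • ContinuousLinearMap.id ℝ E - fderiv ℝ w x).det| = (q x).eval s := by
    intro s hs x
    have h1 : (s • ContinuousLinearMap.id ℝ E - fderiv ℝ w x).det = (q x).eval s := by
      simp only [q]
      rw [LinearMap.eval_charpoly]
      rfl
    rw [h1, abs_of_pos]
    exact charpoly_pos hE _ ((norm_fderiv_le_of_lipschitz ℝ hL).trans_lt hs)
  have hint : ∀ s : ℝ, K < s → IntegrableOn (fun x => (q x).eval s) S μ := by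
    intro s hs
    have := (integrableOn_image_iff_integrableOn_abs_det_fderiv_smul μ hSm (hder s) (hinj s hs).injOn (fun _ => (1:ℝ))).1
      (by
        rw [himg s hs]
        exact (integrableOn_const (measure_ball_lt_top.ne)).mono_set sdiff_subset)
    simpa only [hdet s hs, smul_eq_mul, mul_one] using this
  have hval : ∀ s : ℝ, K < s → ∫ x in S, (q x).eval s ∂μ = (Real.sqrt (s^2+1))^N * V := by
    intro s hs
    have := integral_image_eq_integral_abs_det_fderiv_smul μ hSm (hder s) (hinj s hs).injOn (fun _ => (1:ℝ))
    simp only [hdet s hs, smul_eq_mul, mul_one] at this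
    rw [← this, himg s hs]
    simp only [integral_const, smul_eq_mul, mul_one, measureReal_restrict_apply_univ]
    rw [measureReal_def, measure_sdiff_null (measure_singleton 0), Measure.addHaar_ball μ _ (by positivity), ENNReal.toReal_mul,
      ENNReal.toReal_ofReal (by positivity)]
  let v : ℕ → ℝ := fun i => K + 1 + i
  have hv : ∀ i, (K:ℝ) < v i := fun i => by simp only [v]; have : (0:ℝ) ≤ i := by positivity
                                            linarith
  have hvinj : Set.InjOn v (Finset.range (N+1) : Set ℕ) := by
    intro i _ j _ h
    simpa [v] using h
  let P : Polynomial ℝ := Lagrange.interpolate (Finset.range (N+1)) v (fun i => ∫ x in S, (q x).eval (v i) ∂μ)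
  apply poly_contra hE P V hV K
  intro s hs
  rw [← hval s hs]
  have hq : ∀ x, (q x).eval s = ∑ i ∈ Finset.range (N+1), (q x).eval (v i) * (Lagrange.basis (Finset.range (N+1)) v i).eval s := by
    intro x
    have hdeg : (q x).degree < (Finset.range (N+1)).card := by
      rw [Finset.card_range]
      refine Polynomial.degree_le_natDegree.trans_lt ?_
      rw [show (q x).natDegree = N from LinearMap.charpoly_natDegree _]
      exact_mod_cast Nat.lt_succ_self N
    conv_lhs => rw [Lagrange.eq_interpolate hvinj hdeg]
    simp [Lagrange.interpolate_apply, Polynomial.eval_finsetSum]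
  simp_rw [hq]
  rw [integral_finsetSum _ (fun i _ => (hint _ (hv i)).mul_const _)]
  simp only [P, Lagrange.interpolate_apply, Polynomial.eval_finsetSum, Polynomial.eval_mul, Polynomial.eval_C, integral_mul_const]

lemma hairy {E : Type*} [NormedAddCommGroup E] [InnerProductSpace ℝ E] [FiniteDimensional ℝ E]
    [MeasurableSpace E] [BorelSpace E]
    (hE : Odd (finrank ℝ E)) (F : E → E) (hF : Continuous F) :
    ∃ v : E, v ≠ 0 ∧ ∃ μ : ℝ, F v = μ • v := by
  have : Nontrivial E := Module.nontrivial_of_finrank_pos (R := ℝ) hE.pos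
  by_contra! hcon
  let T : (E → E) → E → E := fun p x => (‖x‖^2) • p x - (inner ℝ x (p x)) • x
  have hTF : ∀ x ∈ sphere (0:E) 1, 0 < ‖T F x‖ := by
    intro x hx
    have hx1 : ‖x‖ = 1 := by simpa using hx
    rw [norm_pos_iff]
    intro h
    apply hcon x (by rintro rfl; simp at hx1) (inner ℝ x (F x))
    simpa [T, hx1, sub_eq_zero] using h
  have hTc : Continuous (fun x => ‖T F x‖) := by
    simp only [T]; fun_prop
  obtain ⟨x0, hx0, hmin⟩ := (isCompact_sphere (0:E) 1).exists_isMinOn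
    (NormedSpace.sphere_nonempty.2 zero_le_one) hTc.continuousOn
  set ε := ‖T F x0‖ with hε
  have hεp : 0 < ε := hTF x0 hx0
  obtain ⟨g, hg, hgd, -⟩ := hF.exists_contDiff_approx 1 (ε := fun _ => ε / 2) continuous_const (fun _ => by positivity)
  have hgT : ContDiff ℝ 1 (T g) := by
    simp only [T]
    have hg' : ContDiff ℝ 1 g := hg
    exact ((contDiff_norm_sq ℝ).smul hg').sub ((contDiff_id.inner ℝ hg').smul contDiff_id)
  have hTg : ∀ x ∈ sphere (0:E) 1, T g x ≠ 0 := by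
    intro x hx h0
    have hx1 : ‖x‖ = 1 := by simpa using hx
    have h1 : ε ≤ ‖T F x‖ := hmin hx
    have h2 : T F x = T F x - T g x := by rw [h0, sub_zero]
    have h3 : T F x - T g x = (F x - g x) - (inner ℝ x (F x - g x)) • x := by
      simp only [T, hx1, inner_sub_right, sub_smul]; simp; abel
    have h4 := norm_sub_le (F x - g x) ((inner ℝ x (F x - g x)) • x)
    have h5 := abs_real_inner_le_norm x (F x - g x)
    have h6 := hgd x
    rw [dist_comm, dist_eq_norm] at h6
    rw [norm_smul, hx1, Real.norm_eq_abs] at h4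
    rw [hx1] at h5
    rw [h2, h3] at h1
    linarith
  have hTo : ∀ x, inner ℝ x (T g x) = 0 := by
    intro x
    simp only [T, inner_sub_right, inner_smul_right, real_inner_self_eq_norm_sq]
    ring
  let u : E → E := fun x => ‖T g x‖⁻¹ • T g x
  have hu : ∀ x ∈ sphere (0:E) 1, ContDiffAt ℝ 1 u x := by
    intro x hx
    exact ((hgT.contDiffAt.norm ℝ (hTg x hx)).inv (norm_ne_zero_iff.2 (hTg x hx))).smul hgT.contDiffAt
  have hu1 : ∀ x ∈ sphere (0:E) 1, ‖u x‖ = 1 := by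
    intro x hx
    simp only [u, norm_smul, norm_inv, norm_norm]
    exact inv_mul_cancel₀ (norm_ne_zero_iff.2 (hTg x hx))
  obtain ⟨L, hL⟩ : ∃ L, LipschitzOnWith L u (sphere (0:E) 1) := by
    apply LocallyLipschitzOn.exists_lipschitzOnWith_of_compact (isCompact_sphere _ _)
    intro x hx
    obtain ⟨K, t, ht, h⟩ := (hu x hx).exists_lipschitzOnWith
    exact ⟨K, t, mem_nhdsWithin_of_mem_nhds ht, h⟩
  have hsph : ∀ x : E, x ≠ 0 → ‖x‖⁻¹ • x ∈ sphere (0:E) 1 := by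
    intro x hx
    simp [norm_smul, inv_mul_cancel₀ (norm_ne_zero_iff.2 hx)]
  let w : E → E := fun x => ‖x‖ • u (‖x‖⁻¹ • x)
  have hw0 : w 0 = 0 := by simp [w]
  have hwn : ∀ x, ‖w x‖ = ‖x‖ := by
    intro x
    by_cases hx : x = 0
    · rw [hx, hw0]
    · simp [w, norm_smul, hu1 _ (hsph x hx)]
  refine milnor hE w (1 + 2 * L) ?_ ?_ ?_ hwn
  · apply LipschitzWith.of_dist_le_mul
    intro x y
    rw [dist_eq_norm, dist_eq_norm]
    push_cast
    have hL0 : (0:ℝ) ≤ L := L.2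
    by_cases hx : x = 0
    · rw [hx, hw0, zero_sub, zero_sub, norm_neg, norm_neg, hwn]
      nlinarith [norm_nonneg y]
    by_cases hy : y = 0
    · rw [hy, hw0, sub_zero, sub_zero, hwn]
      nlinarith [norm_nonneg x]
    have hx' : ‖x‖ ≠ 0 := norm_ne_zero_iff.2 hx
    have hy' : ‖y‖ ≠ 0 := norm_ne_zero_iff.2 hy
    set a := ‖x‖⁻¹ • x with ha
    set b := ‖y‖⁻¹ • y with hb
    have e1 : w x - w y = (‖x‖ - ‖y‖) • u a + ‖y‖ • (u a - u b) := by
      simp only [w, ← ha, ← hb, sub_smul, smul_sub]; abel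
    have e2 : ‖y‖ • (a - b) = (x - y) - (‖x‖ - ‖y‖) • a := by
      have h1 : ‖x‖ • a = x := by rw [ha, smul_inv_smul₀ hx']
      have h2 : ‖y‖ • b = y := by rw [hb, smul_inv_smul₀ hy']
      rw [smul_sub, sub_smul, h1, h2]; abel
    have hn := abs_norm_sub_norm_le x y
    have ha1 : ‖a‖ = 1 := by simpa using hsph x hx
    have e3 : ‖y‖ * ‖a - b‖ ≤ 2 * ‖x - y‖ := by
      calc ‖y‖ * ‖a - b‖ = ‖‖y‖ • (a - b)‖ := by rw [norm_smul, norm_norm]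
        _ ≤ ‖x - y‖ + ‖(‖x‖ - ‖y‖) • a‖ := by rw [e2]; exact norm_sub_le _ _
        _ ≤ _ := by rw [norm_smul, ha1, Real.norm_eq_abs]; linarith
    have e4 := hL.norm_sub_le (hsph x hx) (hsph y hy)
    rw [← ha, ← hb] at e4
    calc ‖w x - w y‖ ≤ ‖(‖x‖ - ‖y‖) • u a‖ + ‖‖y‖ • (u a - u b)‖ := by rw [e1]; exact norm_add_le _ _
      _ = |‖x‖ - ‖y‖| + ‖y‖ * ‖u a - u b‖ := by
        rw [norm_smul _ (u a), hu1 a (hsph x hx), norm_smul _ (u a - u b), norm_norm, Real.norm_eq_abs, mul_one]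
      _ ≤ ‖x - y‖ + ‖y‖ * (L * ‖a - b‖) := by gcongr
      _ = ‖x - y‖ + L * (‖y‖ * ‖a - b‖) := by ring
      _ ≤ ‖x - y‖ + L * (2 * ‖x - y‖) := by gcongr
      _ = _ := by ring
  · intro x hx
    have hn : DifferentiableAt ℝ (fun x : E => ‖x‖) x := differentiableAt_id.norm ℝ hx
    have hi : DifferentiableAt ℝ (fun x : E => ‖x‖⁻¹ • x) x :=
      (hn.inv (norm_ne_zero_iff.2 hx)).smul differentiableAt_id
    have h3 : DifferentiableAt ℝ u (‖x‖⁻¹ • x) := (hu _ (hsph x hx)).differentiableAt (by norm_num)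
    exact hn.smul (DifferentiableAt.comp (f := fun x : E => ‖x‖⁻¹ • x) x h3 hi)
  · intro x
    by_cases hx : x = 0
    · rw [hx, inner_zero_left]
    have h := hTo (‖x‖⁻¹ • x)
    rw [inner_smul_left] at h
    have h' : inner ℝ x (T g (‖x‖⁻¹ • x)) = 0 := by
      rcases mul_eq_zero.1 h with h | h
      · exact absurd h (by simpa using hx)
      · exact h
    simp only [w, u, inner_smul_right, h', mul_zero]

end Aux

/-- every continuous homogeneous map `f : ℝⁿ → ℝⁿ` (with `n` odd) that
does not vanish away from the origin has a fixed o-line: there are `v ≠ 0` and `μ ∈ ℝ`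
with `f(v) = μ v`. -/
theorem odd_dimension_fixed_oline
    {n : ℕ} (hn : Odd n)
    (f : (Fin n → ℝ) → (Fin n → ℝ))
    (hcont : Continuous f)
    (hhom : ∀ (c : ℝ), c ≠ 0 → ∀ x, f (c • x) = c • f x)
    (hnz : ∀ x : Fin n → ℝ, x ≠ 0 → f x ≠ 0) :
    ∃ (v : Fin n → ℝ), v ≠ 0 ∧ ∃ μ : ℝ, f v = μ • v := by
  let F : EuclideanSpace ℝ (Fin n) → EuclideanSpace ℝ (Fin n) := fun x => WithLp.toLp 2 (f (WithLp.ofLp x))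
  have hF : Continuous F := by
    simp only [F]; fun_prop
  obtain ⟨v, hv, μ, h⟩ := hairy (by simpa using hn) F hF
  refine ⟨WithLp.ofLp v, by simpa using hv, μ, ?_⟩
  have := congrArg WithLp.ofLp h
  simpa [F] using this
end
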